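/- A nonprincipal ultrafilter u on ℕ is a Ramsey ultrafilter if and only if for every n ≥ 1 and every function f : ℕ^n → ℕ, either the diagonal ultrafilter extension f̃(u, u, …, u) (n arguments) is principal, or there exists m with 1 ≤ m ≤ n such that f̃(u, u, …, u) is Rudin–Keisler equivalent to the m-fold product u × u × … × u. -/

import Mathlib

/-! Common definitions. -/

/-- The `i`-th smallest element of a finite set of naturals (default 0 if `i ≥ |s|`). -/
def nth (s : Finset ℕ) (i : ℕ) : ℕ := (s.sort (· ≤ ·)).getD i 0

/-- `[ω]^n` : the set of `n`-element subsets of `ℕ` (as `Finset`s). -/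
def cube (n : ℕ) : Set (Finset ℕ) := {s | s.card = n}

/-- `P` is a partition of `Z` (one member may be empty). -/
def IsPartitionOn (Z : Set (Finset ℕ)) (P : Set (Set (Finset ℕ))) : Prop :=
  ⋃₀ P = Z ∧ ∀ A ∈ P, ∀ B ∈ P, A ∩ B = ∅ ∨ A = B

/-- The equivalence relation `≈_P` induced by a partition `P`. -/
def EquivP (P : Set (Set (Finset ℕ))) (p q : Finset ℕ) : Prop := ∃ A ∈ P, p ∈ A ∧ q ∈ A

/-- `X` is `I`-canonical for a partition `P` of `[ω]^n`. -/
def ICanon (n : ℕ) (P : Set (Set (Finset ℕ))) (I : Set ℕ) (X : Set ℕ) : Prop :=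
  ∀ p q : Finset ℕ, ↑p ⊆ X → p.card = n → ↑q ⊆ X → q.card = n →
    (EquivP P p q ↔ ∀ i ∈ I, nth p i = nth q i)

/-- `X` is canonical for a partition `P` of `[ω]^n`. -/
def Canon (n : ℕ) (P : Set (Set (Finset ℕ))) (X : Set ℕ) : Prop :=
  ∃ I : Set ℕ, I ⊆ Set.Iio n ∧ ICanon n P I X

/-- `X` is homogeneous for a partition `P` of `[ω]^n`. -/
def Homog (n : ℕ) (P : Set (Set (Finset ℕ))) (X : Set ℕ) : Prop :=
  ∃ A ∈ P, ∀ s : Finset ℕ, ↑s ⊆ X → s.card = n → s ∈ A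

/-- `[2n]^n` : the `n`-element subsets of `{0, …, 2n-1}`. -/
def idx (n : ℕ) : Finset (Finset ℕ) := Finset.powersetCard n (Finset.range (2 * n))

/-- The set `Q_{pq} = { z ∈ [ω]^{2n} : {z_[i] : i ∈ p} ≈_P {z_[i] : i ∈ q} }`. -/
def Qpq (n : ℕ) (P : Set (Set (Finset ℕ))) (p q : Finset ℕ) : Set (Finset ℕ) :=
  {z | z.card = 2 * n ∧ EquivP P (p.image (nth z)) (q.image (nth z))}

/-- `P*` : the atoms of the field of subsets of `[ω]^{2n}` generated by the sets `Q_{pq}`. -/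
def Atoms (n : ℕ) (P : Set (Set (Finset ℕ))) : Set (Set (Finset ℕ)) :=
  {Q | Q.Nonempty ∧ ∃ S : Finset ℕ → Finset ℕ → Set (Finset ℕ),
    (∀ p ∈ idx n, ∀ q ∈ idx n, S p q = Qpq n P p q ∨ S p q = cube (2 * n) \ Qpq n P p q) ∧
    Q = ⋂ p ∈ idx n, ⋂ q ∈ idx n, S p q}

/-- `I_{pq} = { i < n : p_[i] = q_[i] }`. -/
def Ipq (n : ℕ) (p q : Finset ℕ) : Set ℕ := {i | i < n ∧ nth p i = nth q i}

/-- `I(Q) = ⋂ { I_{pq} : p, q ∈ [2n]^n, Q ⊆ Q_{pq} }`. -/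
def IofQ (n : ℕ) (P : Set (Set (Finset ℕ))) (Q : Set (Finset ℕ)) : Set ℕ :=
  ⋂ p ∈ idx n, ⋂ q ∈ idx n, ⋂ (_ : Q ⊆ Qpq n P p q), Ipq n p q

/-- `ρ(a,b) = |(a △ b) ∩ X|`, identifying `a` with `{0, …, a-1}`. -/
noncomputable def rho (X : Set ℕ) (a b : ℕ) : ℕ := (X ∩ Set.Ico (min a b) (max a b)).ncard

/-- The sparsity `d(x) = min { ρ(a,b) : a, b ∈ x ∪ {e}, a ≠ b }` (with `d(∅) = ⊤ = ω`). -/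
noncomputable def sparsity (X : Set ℕ) (e : ℕ) (x : Finset ℕ) : ℕ∞ :=
  ⨅ a ∈ (x ∪ {e} : Finset ℕ), ⨅ b ∈ (x ∪ {e} : Finset ℕ), ⨅ _ : a ≠ b, (rho X a b : ℕ∞)

/-- `r(x,y) = max_{b ∈ y} min { ρ(a,b) : a ∈ x ∪ {e}, a ≤ b }`. -/
noncomputable def rfun (X : Set ℕ) (e : ℕ) (x y : Finset ℕ) : ℕ :=
  y.sup fun b => sInf ((fun a => rho X a b) '' {a : ℕ | a ∈ (x ∪ {e} : Finset ℕ) ∧ a ≤ b})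

/-- `x →_{pq} y` : there is `z ∈ [X]^{2n}` with `{z_[i] : i ∈ p} = x` and `{z_[i] : i ∈ q} = y`. -/
def Arrow (X : Set ℕ) (n : ℕ) (p q x y : Finset ℕ) : Prop :=
  ∃ z : Finset ℕ, ↑z ⊆ X ∧ z.card = 2 * n ∧ p.image (nth z) = x ∧ q.image (nth z) = y

/-- `x ↔_Q y` : `x →_{pq} y` for some `p, q ∈ [2n]^n` with `Q ⊆ Q_{pq}`. -/
def RelQ (n : ℕ) (P : Set (Set (Finset ℕ))) (Q : Set (Finset ℕ)) (X : Set ℕ)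
    (x y : Finset ℕ) : Prop :=
  ∃ p ∈ idx n, ∃ q ∈ idx n, Q ⊆ Qpq n P p q ∧ Arrow X n p q x y

/-- `x_0, …, x_l` is a `t`-cascade. -/
def IsCascade (n : ℕ) (P : Set (Set (Finset ℕ))) (Q : Set (Finset ℕ)) (X : Set ℕ) (e : ℕ)
    (t l : ℕ) (x : ℕ → Finset ℕ) : Prop :=
  (∀ i ≤ l, ↑(x i) ⊆ X \ {e} ∧ (x i).card = n) ∧
  ∀ i < l, ((n ^ (t - 2 * i) : ℕ) : ℕ∞) ≤ sparsity X e (x i) ∧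
    rfun X e (x i) (x (i + 1)) ≤ n ^ (t - 2 * i - 1) ∧
    RelQ n P Q X (x i) (x (i + 1))

/-- The `n`-fold Fubini power `u ⊗ ⋯ ⊗ u` of an ultrafilter on `ℕ`, as an
ultrafilter on `Fin n → ℕ`. -/
noncomputable def tensorPow (u : Ultrafilter ℕ) : (n : ℕ) → Ultrafilter (Fin n → ℕ)
  | 0 => pure (fun i => i.elim0)
  | n + 1 => u.bind fun a => (tensorPow u n).map (Fin.cons a)

/-- The diagonal ultrafilter extension `f̃(u, u, …, u)` of `f : ℕ^n → ℕ`. -/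
noncomputable def diagExt {n : ℕ} (f : (Fin n → ℕ) → ℕ) (u : Ultrafilter ℕ) : Ultrafilter ℕ :=
  (tensorPow u n).map f

/-- The Rudin–Keisler preorder. -/
def RKle (u v : Ultrafilter ℕ) : Prop := ∃ h : ℕ → ℕ, v.map h = u

/-- Rudin–Keisler equivalence. -/
def RKeq (u v : Ultrafilter ℕ) : Prop := RKle u v ∧ RKle v u

/-- `u` is nonprincipal: it contains no finite set. -/
def Nonprincipal (u : Ultrafilter ℕ) : Prop := ∀ S : Set ℕ, S.Finite → S ∉ u

/-- `u` is a Ramsey ultrafilter. -/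
def IsRamseyU (u : Ultrafilter ℕ) : Prop :=
  Nonprincipal u ∧ ∀ n : ℕ, 1 ≤ n → ∀ P : Set (Set (Finset ℕ)),
    IsPartitionOn (cube n) P → P.Finite → ∃ X ∈ u, Homog n P X

/-- `f : ℕ^n → ℕ` is selectively upward injective on `X` w.r.t. the index set `I`
(`I = ∅` gives "upward constant"). -/
def SelUpInjWrt (n : ℕ) (f : (Fin n → ℕ) → ℕ) (X : Set ℕ) (I : Set (Fin n)) : Prop :=
  ∀ x y : Fin n → ℕ, (∀ i, x i ∈ X) → (∀ i, y i ∈ X) → StrictMono x → StrictMono y →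
    (f x = f y ↔ ∀ i ∈ I, x i = y i)

/-! A nonprincipal ultrafilter is Ramsey exactly when its Fubini powers are generated by the
increasing tuples from its members, since a property of `n`-element sets is a property of increasing
`n`-tuples.

If this holds, then on a suitable member `X` of `u` the relation `f x = f y` between increasing
`n`-tuples depends only on their relative order type. The argument of the Erdős–Rado canonization
theorem then shows that `f x = f y` iff `x` and `y` agree on a fixed set of `m` coordinates, so `f`
sends the `n`-th Fubini power of `u` to an ultrafilter equivalent to the `m`-th, which is principal
for `m = 0`.

Conversely, apply the dichotomy to functions of one variable. If `f̃(u)` is equivalent to `u`, some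
`h ∘ f` maps `u` to itself. Both `{a | h (f a) < a}` and `{a | a < h (f a)}` have a 2-colouring in
which every `a` differs in colour from `h (f a)`, which is impossible on a member of an ultrafilter
that `h ∘ f` preserves. So `h ∘ f` is the identity on a member of `u`, and `f` is injective there.
Hence `u` is selective: it is closed under diagonal intersections, and these yield the base of
increasing tuples by induction on the number of coordinates. -/

section Ultrafilter

variable {α : Type*} {u : Ultrafilter α}

lemma eventually_iff_eventually (u : Ultrafilter α) (p : α → Prop) :
    ∀ᶠ a in u, (p a ↔ ∀ᶠ b in u, p b) := by
  rcases u.em p with h | h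
  · filter_upwards [h] with a ha using iff_of_true ha h
  · filter_upwards [h] with a ha using iff_of_false ha (Ultrafilter.eventually_not.1 h)

lemma exists_alternating_of_exists_iterate_notMem {h : α → α} {s : Set α}
    (hs : ∀ a, ∃ k, h^[k] a ∉ s) : ∃ c : α → Prop, ∀ a ∈ s, (c a ↔ ¬ c (h a)) := by
  classical
  refine ⟨fun a => Even (Nat.find (hs a)), fun a ha => ?_⟩
  have find_eq : Nat.find (hs a) = Nat.find (hs (h a)) + 1 :=
    Nat.find_comp_succ (hs a) (hs (h a)) (not_not.2 ha)
  simp only [find_eq, Nat.even_add_one]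

-- Colourings that alternate on every finite part have a limit along an ultrafilter on the
-- directed set of finite parts, and the limit alternates everywhere.
lemma exists_alternating_of_forall_finset {h : α → α} {s : Set α}
    (hs : ∀ T : Finset α, ∃ c : α → Prop, ∀ a ∈ s ∩ T, (c a ↔ ¬ c (h a))) :
    ∃ c : α → Prop, ∀ a ∈ s, (c a ↔ ¬ c (h a)) := by
  choose c hc using hs
  let v : Ultrafilter (Finset α) := Ultrafilter.of Filter.atTop
  refine ⟨fun a => ∀ᶠ T in (v : Filter (Finset α)), c T a, fun a ha => ?_⟩
  have mem_eventually : ∀ᶠ T in (v : Filter (Finset α)), a ∈ T :=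
    Ultrafilter.of_le Filter.atTop <|
      (Filter.eventually_ge_atTop {a}).mono fun T hT => Finset.singleton_subset_iff.1 hT
  rw [← Ultrafilter.eventually_not]
  exact Filter.eventually_congr (mem_eventually.mono fun T hT => hc T a ⟨ha, hT⟩)

lemma not_eventually_alternating_of_map_eq {h : α → α} (hu : u.map h = u) (c : α → Prop) :
    ¬ ∀ᶠ a in u, (c a ↔ ¬ c (h a)) := by
  intro alternating
  have transport : (∀ᶠ a in u, c (h a)) ↔ ∀ᶠ a in u, c a :=
    Iff.of_eq (congrArg (fun v : Ultrafilter α => ∀ᶠ a in v, c a) hu)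
  have := Filter.eventually_congr alternating
  rw [Ultrafilter.eventually_not, transport] at this
  tauto

lemma eventually_apply_eq_of_map_eq {h : α → α} (hu : u.map h = u) : ∀ᶠ a in u, h a = a := by
  obtain ⟨_, _⟩ := exists_wellFoundedLT α
  have descending : ∃ c : α → Prop, ∀ a ∈ {a | h a < a}, (c a ↔ ¬ c (h a)) := by
    refine exists_alternating_of_exists_iterate_notMem fun a => ?_
    obtain ⟨_, ⟨k, rfl⟩, hmin⟩ :=
      wellFounded_lt.has_min (Set.range fun k => h^[k] a) (Set.range_nonempty _)
    refine ⟨k, fun hlt => hmin (h^[k + 1] a) ⟨k + 1, rfl⟩ ?_⟩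
    rwa [Function.iterate_succ_apply']
  have ascending : ∃ c : α → Prop, ∀ a ∈ {a | a < h a}, (c a ↔ ¬ c (h a)) := by
    refine exists_alternating_of_forall_finset fun T =>
      exists_alternating_of_exists_iterate_notMem fun a => ?_
    by_contra! hT
    have strictMono_iterate : StrictMono fun k => h^[k] a := strictMono_nat_of_lt_succ fun k => by
      rw [Function.iterate_succ_apply']
      exact (hT k).1
    exact Set.infinite_of_injective_forall_mem strictMono_iterate.injective (fun k => (hT k).2)
      T.finite_toSet
  by_contra hne
  have : ∀ᶠ a in u, h a < a ∨ a < h a :=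
    (Ultrafilter.eventually_not.2 hne).mono fun a ha => lt_or_gt_of_ne ha
  rcases Ultrafilter.eventually_or.1 this with hlt | hgt
  · obtain ⟨c, hc⟩ := descending
    exact not_eventually_alternating_of_map_eq hu c (hlt.mono hc)
  · obtain ⟨c, hc⟩ := ascending
    exact not_eventually_alternating_of_map_eq hu c (hgt.mono hc)

end Ultrafilter

section RudinKeisler

lemma RKle.trans {u v w : Ultrafilter ℕ} : RKle u v → RKle v w → RKle u w := by
  rintro ⟨g, rfl⟩ ⟨h, rfl⟩
  exact ⟨g ∘ h, by rw [Ultrafilter.map_map]⟩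

lemma rkle_map_of_eq_imp_eq {α : Type*} {v : Ultrafilter α} {A : Set α} (hA : A ∈ v)
    {f g : α → ℕ} (hfg : ∀ x ∈ A, ∀ y ∈ A, f x = f y → g x = g y) : RKle (v.map g) (v.map f) := by
  have factors : (A.domRestrict g).FactorsThrough (A.domRestrict f) :=
    fun x y => hfg x x.2 y y.2
  refine ⟨Function.extend (A.domRestrict f) (A.domRestrict g) 0, ?_⟩
  rw [Ultrafilter.map_map, ← Ultrafilter.coe_inj, Ultrafilter.coe_map, Ultrafilter.coe_map]
  refine Filter.map_congr (Filter.mem_of_superset hA fun x hx => ?_)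
  exact factors.extend_apply 0 ⟨x, hx⟩

end RudinKeisler

section IncreasingTuples

/-- The increasing `k`-tuples with entries in `X`: the set `[X]^k`, with a finite set encoded by
its increasing enumeration. -/
def increasingTuples {α : Type*} [Preorder α] (X : Set α) (k : ℕ) : Set (Fin k → α) :=
  {x | StrictMono x ∧ ∀ i, x i ∈ X}

variable {α : Type*} {X Y : Set α} {k m n : ℕ}

lemma comp_castSucc_succAbove (z : Fin (n + 1) → α) (i : Fin n) :
    z ∘ i.castSucc.succAbove = Function.update (z ∘ i.succ.succAbove) i (z i.succ) := by
  funext j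
  rcases lt_trichotomy j i with hj | rfl | hj
  · simp [Function.update_of_ne hj.ne, Fin.succAbove_castSucc_of_lt _ _ hj,
      Fin.succAbove_succ_of_le _ _ hj.le]
  · simp
  · simp [Function.update_of_ne hj.ne', Fin.succAbove_castSucc_of_le _ _ hj.le,
      Fin.succAbove_succ_of_lt _ _ hj]

lemma increasingTuples_mono [Preorder α] (h : X ⊆ Y) (k : ℕ) :
    increasingTuples X k ⊆ increasingTuples Y k :=
  fun _ hx => ⟨hx.1, fun i => h (hx.2 i)⟩

lemma comp_mem_increasingTuples [Preorder α] {x : Fin n → α} (hx : x ∈ increasingTuples X n)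
    {r : Fin m → Fin n} (hr : StrictMono r) : x ∘ r ∈ increasingTuples X m :=
  ⟨hx.1.comp hr, fun i => hx.2 (r i)⟩

lemma cons_mem_increasingTuples_iff [Preorder α] {a : α} {x : Fin k → α} :
    (Fin.cons a x : Fin (k + 1) → α) ∈ increasingTuples X (k + 1) ↔
      a ∈ X ∧ x ∈ increasingTuples (X ∩ Set.Ioi a) k := by
  simp only [increasingTuples, Set.mem_ofPred_eq, Fin.strictMono_cons, Fin.forall_fin_succ,
    Fin.cons_zero, Fin.cons_succ, Set.mem_inter_iff, Set.mem_Ioi, forall_and]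
  tauto

lemma update_mem_increasingTuples [Preorder α] {x : Fin n → α} (hx : x ∈ increasingTuples X n)
    {i : Fin n} {a : α} (ha : a ∈ X) (lt_a : ∀ j < i, x j < a) (a_lt : ∀ j > i, a < x j) :
    Function.update x i a ∈ increasingTuples X n := by
  refine ⟨fun j l hjl => ?_, fun j => ?_⟩
  · rcases eq_or_ne j i with rfl | hj
    · simpa [hjl.ne'] using a_lt l hjl
    · rcases eq_or_ne l i with rfl | hl
      · simpa [hj] using lt_a j hjl
      · simpa [hj, hl] using hx.1 hjl
  · rcases eq_or_ne j i with rfl | hj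
    · simpa using ha
    · simpa [hj] using hx.2 j

lemma exists_comp_succAbove_eq [Preorder α] {x : Fin n → α} {i : Fin n} {a : α}
    (hx : x ∈ increasingTuples X n) (hxa : Function.update x i a ∈ increasingTuples X n)
    (ha : x i < a) :
    ∃ z ∈ increasingTuples X (n + 1),
      z ∘ i.succ.succAbove = x ∧ z ∘ i.castSucc.succAbove = Function.update x i a := by
  have comp_eq : Fin.insertNth i.succ a x ∘ i.succ.succAbove = x :=
    funext fun j => Fin.insertNth_apply_succAbove (α := fun _ => α) ..
  refine ⟨Fin.insertNth i.succ a x, ⟨?_, ?_⟩, comp_eq, ?_⟩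
  · refine (Fin.strictMono_insertNth_iff i.succ a x).2 ⟨hx.1, fun j hj => ?_, fun j hj => ?_⟩
    · exact (hx.1.monotone (Fin.castSucc_lt_succ_iff.1 hj)).trans_lt ha
    · have hij : i < j := Fin.succ_le_castSucc_iff.1 hj
      simpa [hij.ne'] using hxa.1 hij
  · exact (Fin.forall_iff_succAbove i.succ).2
      ⟨by simpa using hxa.2 i, fun j => by simpa using hx.2 j⟩
  · rw [comp_castSucc_succAbove, comp_eq, Fin.insertNth_apply_same]

lemma exists_common_enumeration [LinearOrder α] {x y : Fin n → α}
    (hx : x ∈ increasingTuples X n) (hy : y ∈ increasingTuples X n) :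
    ∃ k ≤ 2 * n, ∃ z ∈ increasingTuples X k, ∃ p q : Fin n → Fin k, z ∘ p = x ∧ z ∘ q = y := by
  let T : Finset α := Finset.univ.image x ∪ Finset.univ.image y
  have card_image (w : Fin n → α) : (Finset.univ.image w).card ≤ n := by
    simpa using Finset.card_image_le (s := Finset.univ) (f := w)
  have range_enum : Set.range (T.orderEmbOfFin rfl) = T := Finset.range_orderEmbOfFin T rfl
  have mem_X (t : α) (ht : t ∈ T) : t ∈ X := by
    simp only [T, Finset.mem_union, Finset.mem_image, Finset.mem_univ, true_and] at ht
    rcases ht with ⟨i, rfl⟩ | ⟨i, rfl⟩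
    exacts [hx.2 i, hy.2 i]
  choose p hp using fun i => show x i ∈ Set.range (T.orderEmbOfFin rfl) by simp [range_enum, T]
  choose q hq using fun i => show y i ∈ Set.range (T.orderEmbOfFin rfl) by simp [range_enum, T]
  refine ⟨T.card, ?_, T.orderEmbOfFin rfl, ⟨(T.orderEmbOfFin rfl).strictMono, fun i =>
    mem_X _ (T.orderEmbOfFin_mem rfl i)⟩, p, q, funext hp, funext hq⟩
  calc T.card ≤ _ + _ := Finset.card_union_le ..
    _ ≤ n + n := add_le_add (card_image x) (card_image y)
    _ = 2 * n := (two_mul n).symm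

lemma increasingTuples_nonempty [LinearOrder α] (hX : X.Infinite) (k : ℕ) :
    (increasingTuples X k).Nonempty := by
  obtain ⟨t, htX, htk⟩ := hX.exists_subset_card_eq k
  exact ⟨t.orderEmbOfFin htk, (t.orderEmbOfFin htk).strictMono,
    fun i => htX (t.orderEmbOfFin_mem htk i)⟩

end IncreasingTuples

section Canonical

variable {α β : Type*} [LinearOrder α] {X : Set α} {n : ℕ} {f : (Fin n → α) → β}

/-- Whether `f` identifies two increasing `n`-tuples from `X` depends only on their relative order
type. A relative order type is encoded by positions `p`, `q` in an increasing `k`-tuple, where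
`k = 2 * n` is the largest length needed to accommodate two `n`-tuples. -/
def OrderInvariantOn (f : (Fin n → α) → β) (X : Set α) : Prop :=
  ∀ k ≤ 2 * n, ∀ z ∈ increasingTuples X k, ∀ z' ∈ increasingTuples X k, ∀ p q : Fin n → Fin k,
    f (z ∘ p) = f (z ∘ q) ↔ f (z' ∘ p) = f (z' ∘ q)

/-- The coordinate `i` is free for `f` on `X` if some increasing tuple from `X` can be raised at `i`
without changing the value of `f`. The non-free coordinates form the index set of the canonical
form of `f`. -/
def IsFreeCoord (f : (Fin n → α) → β) (X : Set α) (i : Fin n) : Prop :=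
  ∃ x ∈ increasingTuples X n, ∃ a, Function.update x i a ∈ increasingTuples X n ∧ x i < a ∧
    f (Function.update x i a) = f x

namespace OrderInvariantOn

lemma apply_update_eq_of_lt (hf : OrderInvariantOn f X) {i : Fin n} (hi : IsFreeCoord f X i)
    {x : Fin n → α} {a : α} (hx : x ∈ increasingTuples X n)
    (hxa : Function.update x i a ∈ increasingTuples X n) (ha : x i < a) :
    f (Function.update x i a) = f x := by
  obtain ⟨y, hy, b, hyb, hb, eq_y⟩ := hi
  obtain ⟨z, hz, zx, zxa⟩ := exists_comp_succAbove_eq hx hxa ha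
  obtain ⟨z', hz', zy, zyb⟩ := exists_comp_succAbove_eq hy hyb hb
  have hn : n + 1 ≤ 2 * n := by have := i.pos; omega
  have := hf (n + 1) hn z hz z' hz' i.castSucc.succAbove i.succ.succAbove
  rw [zx, zxa, zy, zyb] at this
  exact this.2 eq_y

lemma apply_update_eq (hf : OrderInvariantOn f X) {i : Fin n} (hi : IsFreeCoord f X i)
    {x : Fin n → α} {a : α} (hx : x ∈ increasingTuples X n)
    (hxa : Function.update x i a ∈ increasingTuples X n) : f (Function.update x i a) = f x := by
  rcases lt_trichotomy (x i) a with h | rfl | h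
  · exact hf.apply_update_eq_of_lt hi hx hxa h
  · rw [Function.update_eq_self]
  · have restore : Function.update (Function.update x i a) i (x i) = x := by simp
    have := hf.apply_update_eq_of_lt hi (a := x i) hxa (by rwa [restore]) (by simpa using h)
    rwa [restore, eq_comm] at this

-- Raise the coordinates of `x` to those of `y` one at a time, the largest first, so that every
-- intermediate tuple is increasing.
lemma apply_eq_of_le (hf : OrderInvariantOn f X) {x y : Fin n → α}
    (hx : x ∈ increasingTuples X n) (hy : y ∈ increasingTuples X n) (hxy : x ≤ y)
    (hfree : ∀ i, x i ≠ y i → IsFreeCoord f X i) : f x = f y := by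
  induction hd : {i | x i ≠ y i}.ncard generalizing x with
  | zero =>
    rw [Set.ncard_eq_zero] at hd
    exact congrArg f (funext fun i => by_contra fun hi => (hd ▸ hi : i ∈ (∅ : Set (Fin n))))
  | succ d ih =>
    obtain ⟨i, hi, hmax⟩ := exists_maximal_of_wellFoundedGT (fun i => x i ≠ y i)
      (Set.nonempty_of_ncard_ne_zero (hd ▸ d.succ_ne_zero))
    have eq_above (j : Fin n) (hj : i < j) : x j = y j :=
      by_contra fun hne => (hmax hne hj.le).not_gt hj
    have hx' : Function.update x i (y i) ∈ increasingTuples X n :=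
      update_mem_increasingTuples hx (hy.2 i) (fun j hj => (hx.1 hj).trans_le (hxy i))
        fun j hj => (hy.1 hj).trans_eq (eq_above j hj).symm
    have differ_iff (j : Fin n) : Function.update x i (y i) j ≠ y j ↔ j ≠ i ∧ x j ≠ y j := by
      rcases eq_or_ne j i with rfl | hj <;> simp [*]
    rw [← hf.apply_update_eq (hfree i hi) hx hx']
    refine ih hx' (update_le_iff.2 ⟨le_rfl, fun j _ => hxy j⟩)
      (fun j hj => hfree j ((differ_iff j).1 hj).2) ?_
    have remove : {j | Function.update x i (y i) j ≠ y j} = {j | x j ≠ y j} \ {i} := by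
      ext j
      simp [differ_iff, and_comm]
    rw [remove, Set.ncard_sdiff_singleton_of_mem hi, hd, Nat.add_sub_cancel]

lemma apply_eq (hf : OrderInvariantOn f X) {x y : Fin n → α}
    (hx : x ∈ increasingTuples X n) (hy : y ∈ increasingTuples X n)
    (hfree : ∀ i, x i ≠ y i → IsFreeCoord f X i) : f x = f y := by
  have hxy : x ⊔ y ∈ increasingTuples X n :=
    ⟨fun i j hij => max_lt_max (hx.1 hij) (hy.1 hij),
      fun i => sup_ind (x i) (y i) (hx.2 i) (hy.2 i)⟩
  have key (w : Fin n → α) (hw : w ∈ increasingTuples X n) (hle : w ≤ x ⊔ y)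
    (hwxy : ∀ i, x i = y i → w i = x i) : f w = f (x ⊔ y) :=
    hf.apply_eq_of_le hw hxy hle fun i hi => hfree i fun h => hi (by simp [hwxy i h, h])
  exact (key x hx le_sup_left fun _ _ => rfl).trans
    (key y hy le_sup_right fun _ h => h.symm).symm

-- In a longer increasing tuple, the position of `x i` can be moved while keeping all the positions
-- of `y` and all the other positions of `x`.
lemma isFreeCoord_of_notMem_range (hf : OrderInvariantOn f X) (hX : X.Infinite) {x y : Fin n → α}
    (hx : x ∈ increasingTuples X n) (hy : y ∈ increasingTuples X n) (hxy : f x = f y)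
    {i : Fin n} (hi : x i ∉ Set.range y) : IsFreeCoord f X i := by
  obtain ⟨k, hk, z, hz, p, q, rfl, rfl⟩ := exists_common_enumeration hx hy
  have hp : StrictMono p := fun a b hab => hz.1.lt_iff_lt.1 (hx.1 hab)
  have hq : p i ∉ Set.range q := fun ⟨j, hj⟩ => hi ⟨j, congrArg z hj⟩
  obtain ⟨w, hw⟩ := increasingTuples_nonempty hX (k + 1)
  have hw₀ : w ∘ (p i).succ.succAbove ∈ increasingTuples X k :=
    comp_mem_increasingTuples hw (Fin.strictMono_succAbove _)
  have hw₁ := comp_mem_increasingTuples hw (Fin.strictMono_succAbove (p i).castSucc)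
  rw [comp_castSucc_succAbove] at hw₁
  set v := w ∘ (p i).succ.succAbove with hv
  have update_comp_p : Function.update v (p i) (w (p i).succ) ∘ p =
      Function.update (v ∘ p) i (w (p i).succ) :=
    Function.update_comp_eq_of_injective v hp.injective i _
  have update_comp_q : Function.update v (p i) (w (p i).succ) ∘ q = v ∘ q :=
    Function.update_comp_eq_of_notMem_range v _ hq
  refine ⟨v ∘ p, comp_mem_increasingTuples hw₀ hp, w (p i).succ, ?_, ?_, ?_⟩
  · exact update_comp_p ▸ comp_mem_increasingTuples hw₁ hp
  · simpa [hv] using hw.1 (Fin.castSucc_lt_succ (i := p i))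
  · calc f (Function.update (v ∘ p) i (w (p i).succ))
      _ = f (v ∘ q) := by
        rw [← update_comp_p, (hf k hk z hz _ hw₁ p q).1 hxy, update_comp_q]
      _ = f (v ∘ p) := ((hf k hk z hz v hw₀ p q).1 hxy).symm

-- At the first non-free coordinate `i` where they differ, replace `y` below `i` by `x`, which does
-- not change `f y`; then `x i` is not an entry of the new tuple, so `i` is free.
lemma not_lt_of_apply_eq (hf : OrderInvariantOn f X) (hX : X.Infinite) {x y : Fin n → α}
    (hx : x ∈ increasingTuples X n) (hy : y ∈ increasingTuples X n) (hxy : f x = f y)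
    {i : Fin n} (hi : ¬ IsFreeCoord f X i)
    (hbelow : ∀ j < i, ¬ IsFreeCoord f X j → x j = y j) : ¬ x i < y i := by
  intro hlt
  let y' : Fin n → α := fun j => if j < i then x j else y j
  have hy' : y' ∈ increasingTuples X n := by
    refine ⟨fun j l hjl => ?_, fun j => ?_⟩
    · rcases lt_or_ge l i with hl | hl
      · simpa [y', hl, hjl.trans hl] using hx.1 hjl
      · rcases lt_or_ge j i with hj | hj
        · simpa [y', hj, hl.not_gt] using
            (hx.1 hj).trans (hlt.trans_le (hy.1.monotone hl))
        · simpa [y', hj.not_gt, hl.not_gt] using hy.1 hjl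
    · by_cases hj : j < i <;> simp [y', hj, hx.2 j, hy.2 j]
  have eq_y' : f y = f y' := hf.apply_eq hy hy' fun j hj => by
    by_cases hji : j < i
    · by_contra hfree
      exact hj (by simp [y', hji, hbelow j hji hfree])
    · simp [y', hji] at hj
  refine hi (hf.isFreeCoord_of_notMem_range hX hx hy' (hxy.trans eq_y') ?_)
  rintro ⟨j, hj⟩
  by_cases hji : j < i
  · exact (hx.1 hji).ne (by simpa [y', hji] using hj)
  · exact (hlt.trans_le (hy.1.monotone (not_lt.1 hji))).ne (by simpa [y', hji] using hj.symm)

lemma apply_eq_iff (hf : OrderInvariantOn f X) (hX : X.Infinite) {x y : Fin n → α}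
    (hx : x ∈ increasingTuples X n) (hy : y ∈ increasingTuples X n) :
    f x = f y ↔ ∀ i, ¬ IsFreeCoord f X i → x i = y i := by
  refine ⟨fun hxy => ?_, fun h => hf.apply_eq hx hy fun i hi => not_imp_comm.1 (h i) hi⟩
  intro i
  induction i using WellFoundedLT.induction with
  | ind i ih =>
    intro hi
    refine le_antisymm (not_lt.1 ?_) (not_lt.1 ?_)
    · exact hf.not_lt_of_apply_eq hX hy hx hxy.symm hi fun j hj hfree => (ih j hj hfree).symm
    · exact hf.not_lt_of_apply_eq hX hx hy hxy hi ih

end OrderInvariantOn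

end Canonical

section FubiniPower

variable {u : Ultrafilter ℕ} {X : Set ℕ} {k n : ℕ}

lemma Nonprincipal.Ioi_mem (hu : Nonprincipal u) (a : ℕ) : Set.Ioi a ∈ u := by
  rw [← Set.compl_Iic, Ultrafilter.compl_mem_iff_notMem]
  exact hu _ (Set.finite_Iic a)

lemma Nonprincipal.infinite_of_mem (hu : Nonprincipal u) (hX : X ∈ u) : X.Infinite :=
  fun hfin => hu X hfin hX

lemma eq_univ_of_mem_tensorPow_zero {S : Set (Fin 0 → ℕ)} (hS : S ∈ tensorPow u 0) :
    S = Set.univ :=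
  Subsingleton.eq_univ_of_nonempty (Ultrafilter.nonempty_of_mem hS)

lemma mem_tensorPow_succ {S : Set (Fin (k + 1) → ℕ)} :
    S ∈ tensorPow u (k + 1) ↔ ∀ᶠ a in u, {x | Fin.cons a x ∈ S} ∈ tensorPow u k :=
  Iff.rfl

lemma Nonprincipal.increasingTuples_mem (hu : Nonprincipal u) (hX : X ∈ u) (k : ℕ) :
    increasingTuples X k ∈ tensorPow u k := by
  induction k generalizing X with
  | zero => exact Filter.mem_of_superset Filter.univ_mem fun x _ =>
      ⟨fun i => i.elim0, fun i => i.elim0⟩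
  | succ k ih =>
    rw [mem_tensorPow_succ]
    filter_upwards [hX] with a ha
    filter_upwards [ih (Filter.inter_mem hX (hu.Ioi_mem a))] with x hx
    exact cons_mem_increasingTuples_iff.2 ⟨ha, hx⟩

/-- Every Fubini power of `u` is generated by the sets of increasing tuples from members of `u`.
For nonprincipal `u` these sets always belong to the Fubini powers. -/
def HasIncreasingBase (u : Ultrafilter ℕ) : Prop :=
  ∀ k, ∀ S ∈ tensorPow u k, ∃ X ∈ u, increasingTuples X k ⊆ S

lemma card_image_of_strictMono {x : Fin k → ℕ} (hx : StrictMono x) :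
    (Finset.univ.image x).card = k := by
  rw [Finset.card_image_of_injective _ hx.injective, Finset.card_fin]

lemma IsRamseyU.exists_mem_forall_or_forall_not (hu : IsRamseyU u) (hn : 1 ≤ n)
    (p : Finset ℕ → Prop) :
    ∃ X ∈ u, (∀ s : Finset ℕ, ↑s ⊆ X → s.card = n → p s) ∨
      ∀ s : Finset ℕ, ↑s ⊆ X → s.card = n → ¬ p s := by
  have hP : IsPartitionOn (cube n) {cube n ∩ {s | p s}, cube n \ {s | p s}} := by
    refine ⟨by rw [Set.sUnion_pair, Set.inter_union_sdiff], ?_⟩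
    rintro _ (rfl | rfl) _ (rfl | rfl) <;> simp [Set.disjoint_sdiff_inter.inter_eq,
      Set.disjoint_sdiff_inter.symm.inter_eq]
  obtain ⟨X, hX, A, rfl | rfl, homogeneous⟩ := hu.2 n hn _ hP (Set.toFinite _)
  · exact ⟨X, hX, .inl fun s hsX hs => (homogeneous s hsX hs).2⟩
  · exact ⟨X, hX, .inr fun s hsX hs => (homogeneous s hsX hs).2⟩

lemma IsRamseyU.hasIncreasingBase (hu : IsRamseyU u) : HasIncreasingBase u := by
  intro k S hS
  rcases k.eq_zero_or_pos with rfl | hk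
  · exact ⟨Set.univ, Filter.univ_mem, by simp [eq_univ_of_mem_tensorPow_zero hS]⟩
  obtain ⟨X, hX, homogeneous⟩ := hu.exists_mem_forall_or_forall_not hk
    fun s => ∃ x ∈ S, StrictMono x ∧ Finset.univ.image x = s
  have subset_X {x : Fin k → ℕ} (hx : x ∈ increasingTuples X k) :
      ((Finset.univ.image x : Finset ℕ) : Set ℕ) ⊆ X := by
    simpa [Set.range_subset_iff] using hx.2
  rcases homogeneous with all | none
  · refine ⟨X, hX, fun x hx => ?_⟩
    obtain ⟨y, hyS, hy, image_eq⟩ := all _ (subset_X hx) (card_image_of_strictMono hx.1)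
    have : Set.range y = Set.range x := by
      simpa using congrArg (fun s : Finset ℕ => (s : Set ℕ)) image_eq
    exact (hy.range_inj hx.1).1 this ▸ hyS
  · obtain ⟨x, hx, hxS⟩ :=
      Ultrafilter.nonempty_of_mem (Filter.inter_mem (hu.1.increasingTuples_mem hX k) hS)
    exact absurd ⟨x, hxS, hx.1, rfl⟩ (none _ (subset_X hx) (card_image_of_strictMono hx.1))

lemma HasIncreasingBase.isRamseyU (hb : HasIncreasingBase u) (hu : Nonprincipal u) :
    IsRamseyU u := by
  refine ⟨hu, fun n _ P hP hfin => ?_⟩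
  have covers : ⋃ A ∈ P, {x : Fin n → ℕ | Finset.univ.image x ∈ A} ∈ tensorPow u n := by
    filter_upwards [hu.increasingTuples_mem Filter.univ_mem n] with x hx
    have : Finset.univ.image x ∈ ⋃₀ P := hP.1 ▸ card_image_of_strictMono hx.1
    simpa using this
  obtain ⟨A, hA, hmem⟩ := (Ultrafilter.finite_biUnion_mem_iff hfin).1 covers
  obtain ⟨X, hX, hXA⟩ := hb n _ hmem
  refine ⟨X, hX, A, hA, fun s hsX hs => ?_⟩
  have := hXA ⟨(s.orderEmbOfFin hs).strictMono, fun i => hsX (s.orderEmbOfFin_mem hs i)⟩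
  simpa using this

end FubiniPower

section CanonicalForm

variable {u : Ultrafilter ℕ} {m n : ℕ}

lemma HasIncreasingBase.exists_orderInvariantOn (hb : HasIncreasingBase u)
    {β : Type*} (f : (Fin n → ℕ) → β) : ∃ X ∈ u, OrderInvariantOn f X := by
  let sameValue (k : ℕ) (p q : Fin n → Fin k) : Prop :=
    ∀ᶠ z in (tensorPow u k : Filter (Fin k → ℕ)), f (z ∘ p) = f (z ∘ q)
  have decided (k : ℕ) : ∀ᶠ z in (tensorPow u k : Filter (Fin k → ℕ)),
      ∀ p q, (f (z ∘ p) = f (z ∘ q) ↔ sameValue k p q) :=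
    Filter.eventually_all.2 fun p => Filter.eventually_all.2 fun q =>
      eventually_iff_eventually (tensorPow u k) fun z => f (z ∘ p) = f (z ∘ q)
  choose X hX hXk using fun k => hb k _ (decided k)
  refine ⟨⋂ k ∈ Set.Iic (2 * n), X k,
    (Filter.biInter_mem (Set.finite_Iic _)).2 fun k _ => hX k, fun k hk z hz z' hz' p q => ?_⟩
  have mono := increasingTuples_mono (Set.biInter_subset_of_mem (t := X) (Set.mem_Iic.2 hk)) k
  exact (hXk k (mono hz) p q).trans (hXk k (mono hz') p q).symm

lemma HasIncreasingBase.exists_selUpInjWrt (hb : HasIncreasingBase u) (hu : Nonprincipal u)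
    (f : (Fin n → ℕ) → ℕ) : ∃ X ∈ u, ∃ I : Finset (Fin n), SelUpInjWrt n f X I := by
  classical
  obtain ⟨X, hX, hf⟩ := hb.exists_orderInvariantOn f
  refine ⟨X, hX, Finset.univ.filter fun i => ¬ IsFreeCoord f X i, fun x y hxX hyX hx hy => ?_⟩
  simpa using hf.apply_eq_iff (hu.infinite_of_mem hX) ⟨hx, hxX⟩ ⟨hy, hyX⟩

lemma HasIncreasingBase.map_comp_tensorPow (hb : HasIncreasingBase u) (hu : Nonprincipal u)
    {r : Fin m → Fin n} (hr : StrictMono r) :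
    (tensorPow u n).map (fun x => x ∘ r) = tensorPow u m := by
  refine Ultrafilter.eq_of_le fun S hS => ?_
  obtain ⟨Y, hY, hYS⟩ := hb m S hS
  rw [Ultrafilter.mem_coe, Ultrafilter.mem_map]
  filter_upwards [hu.increasingTuples_mem hY n] with x hx
  exact hYS (comp_mem_increasingTuples hx hr)

lemma HasIncreasingBase.exists_rkeq_diagExt (hb : HasIncreasingBase u) (hu : Nonprincipal u)
    (f : (Fin n → ℕ) → ℕ) :
    ∃ m ≤ n, ∃ w : (Fin m → ℕ) → ℕ, Function.Injective w ∧ RKeq (diagExt f u) (diagExt w u) := by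
  obtain ⟨X, hX, I, hI⟩ := hb.exists_selUpInjWrt hu f
  let r := I.orderEmbOfFin rfl
  have diagExt_encode : diagExt (n := I.card) Encodable.encode u =
      (tensorPow u n).map fun x => Encodable.encode (x ∘ r) := by
    rw [diagExt, ← hb.map_comp_tensorPow hu r.strictMono, Ultrafilter.map_map]
    rfl
  have eq_iff (x : Fin n → ℕ) (hx : x ∈ increasingTuples X n) (y : Fin n → ℕ)
      (hy : y ∈ increasingTuples X n) :
      f x = f y ↔ Encodable.encode (x ∘ r) = Encodable.encode (y ∘ r) := by
    rw [hI x y hx.2 hy.2 hx.1 hy.1, Encodable.encode_injective.eq_iff, funext_iff,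
      ← Finset.range_orderEmbOfFin I rfl, Set.forall_mem_range]
    rfl
  have hmem := hu.increasingTuples_mem hX n
  refine ⟨I.card, by simpa using I.card_le_univ, Encodable.encode, Encodable.encode_injective, ?_⟩
  rw [diagExt_encode]
  exact ⟨rkle_map_of_eq_imp_eq hmem fun x hx y hy => (eq_iff x hx y hy).2,
    rkle_map_of_eq_imp_eq hmem fun x hx y hy => (eq_iff x hx y hy).1⟩

lemma exists_eq_pure_of_rkle_diagExt_fin_zero {v : Ultrafilter ℕ} {w : (Fin 0 → ℕ) → ℕ}
    (h : RKle v (diagExt w u)) : ∃ c, v = pure c := by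
  obtain ⟨g, rfl⟩ := h
  exact ⟨_, rfl⟩

end CanonicalForm

section Selective

variable {u : Ultrafilter ℕ}

/-- `u` is selective: every function on `ℕ` is constant or injective on some member of `u`. -/
def IsSelective (u : Ultrafilter ℕ) : Prop :=
  ∀ f : ℕ → ℕ, (∃ c, f ⁻¹' {c} ∈ u) ∨ ∃ Y ∈ u, Set.InjOn f Y

lemma rkle_map_of_injective {w : ℕ → ℕ} (hw : Function.Injective w) : RKle u (u.map w) :=
  ⟨Function.invFun w, by rw [Ultrafilter.map_map, Function.invFun_comp hw, Ultrafilter.map_id]⟩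

lemma isSelective_of_forall_map (H : ∀ f : ℕ → ℕ, (∃ c, u.map f = pure c) ∨ RKle u (u.map f)) :
    IsSelective u := by
  intro f
  rcases H f with ⟨c, hc⟩ | ⟨h, hh⟩
  · refine .inl ⟨c, ?_⟩
    rw [← Ultrafilter.mem_map, hc]
    exact Set.mem_singleton c
  · rw [Ultrafilter.map_map] at hh
    refine .inr ⟨_, eventually_apply_eq_of_map_eq hh, fun a ha b hb hab => ?_⟩
    calc a = h (f a) := ha.symm
      _ = h (f b) := by rw [hab]
      _ = b := hb

lemma diagExt_fin_one (f : (Fin 1 → ℕ) → ℕ) : diagExt f u = u.map fun a => f fun _ => a := by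
  refine Ultrafilter.ext fun S => ?_
  have cons_eq (a : ℕ) (x : Fin 0 → ℕ) : (Fin.cons a x : Fin 1 → ℕ) = fun _ => a :=
    funext fun i => by rw [Fin.fin_one_eq_zero i, Fin.cons_zero]
  change (∀ᶠ a in u, f (Fin.cons a _) ∈ S) ↔ _
  simp only [cons_eq]
  rfl

lemma isSelective_of_forall_rkeq_diagExt
    (H : ∀ f : (Fin 1 → ℕ) → ℕ, (∃ c, diagExt f u = pure c) ∨
      ∃ w : (Fin 1 → ℕ) → ℕ, Function.Injective w ∧ RKeq (diagExt f u) (diagExt w u)) :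
    IsSelective u := by
  refine isSelective_of_forall_map fun f => ?_
  have diagExt_f : diagExt (fun x : Fin 1 → ℕ => f (x 0)) u = u.map f := diagExt_fin_one _
  rw [← diagExt_f]
  refine (H fun x => f (x 0)).imp_right fun ⟨w, hw, _, hle⟩ => RKle.trans ?_ hle
  rw [diagExt_fin_one]
  exact rkle_map_of_injective (hw.comp Function.const_injective)

lemma exists_strictMono_forall_apply_le (g : ℕ → ℕ) :
    ∃ t : ℕ → ℕ, StrictMono t ∧ ∀ j, ∀ a ≤ t j, g a ≤ t (j + 1) := by
  let succBound (b : ℕ) : ℕ := max (b + 1) ((Finset.Iic b).sup g)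
  refine ⟨fun j => succBound^[j] 0, strictMono_nat_of_lt_succ fun j => ?_, fun j a ha => ?_⟩ <;>
    simp only [Function.iterate_succ_apply']
  · exact Nat.lt_of_succ_le (le_max_left _ _)
  · exact (Finset.le_sup (Finset.mem_Iic.2 ha)).trans (le_max_right _ _)

namespace IsSelective

lemma exists_injOn (hs : IsSelective u) {f : ℕ → ℕ} (hf : ∀ c, f ⁻¹' {c} ∉ u) :
    ∃ Y ∈ u, Set.InjOn f Y :=
  (hs f).resolve_left fun ⟨c, hc⟩ => hf c hc

-- Cut `ℕ` into the intervals `(t (j - 1), t j]`. Choose a set that meets each of them at most once,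
-- and meets only those whose index has a fixed parity, so that a whole interval separates any two
-- of its elements.
lemma exists_sparse (hs : IsSelective u) (hu : Nonprincipal u) (g : ℕ → ℕ) :
    ∃ X ∈ u, ∀ a ∈ X, ∀ b ∈ X, a < b → g a ≤ b := by
  classical
  obtain ⟨t, ht, hgt⟩ := exists_strictMono_forall_apply_le g
  have bounded (a : ℕ) : ∃ j, a ≤ t j := ⟨a, ht.le_apply⟩
  let interval (a : ℕ) : ℕ := Nat.find (bounded a)
  have gc : GaloisConnection interval t := fun a j =>
    ⟨fun h => (Nat.find_spec (bounded a)).trans (ht.monotone h), Nat.find_min' (bounded a)⟩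
  obtain ⟨Y, hY, injOn⟩ := hs.exists_injOn (f := interval) fun c =>
    hu _ ((Set.finite_Iic (t c)).subset fun a ha => (gc a c).1 ha.le)
  refine ⟨_, Filter.inter_mem hY (eventually_iff_eventually u fun a => Even (interval a)), ?_⟩
  rintro a ⟨haY, ha_even⟩ b ⟨hbY, hb_even⟩ hab
  have interval_le : interval a ≤ interval b := gc.monotone_l hab.le
  have interval_ne : interval a ≠ interval b := fun h => hab.ne (injOn haY hbY h)
  have parity : Even (interval a) ↔ Even (interval b) := ha_even.trans hb_even.symm
  have interval_lt : interval a + 1 < interval b := by grind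
  calc g a ≤ t (interval a + 1) := hgt _ a (gc.le_u_l a)
    _ ≤ b := (not_le.1 fun h => interval_lt.not_ge ((gc b _).2 h)).le

lemma exists_finite_diff (hs : IsSelective u) (hu : Nonprincipal u) {A : ℕ → Set ℕ}
    (hA : ∀ a, A a ∈ u) : ∃ Y ∈ u, ∀ a, (Y \ A a).Finite := by
  classical
  have exists_least (b : ℕ) : ∃ a, b ∉ A a ∨ b ≤ a := ⟨b, .inr le_rfl⟩
  obtain ⟨Y, hY, injOn⟩ := hs.exists_injOn (f := fun b => Nat.find (exists_least b)) fun c hc => by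
    obtain ⟨b, ⟨rfl, hbA⟩, hb⟩ := Ultrafilter.nonempty_of_mem
      (Filter.inter_mem (Filter.inter_mem hc (hA c)) (hu.Ioi_mem c))
    exact (Nat.find_spec (exists_least b)).elim (· hbA) (not_le.2 hb)
  refine ⟨Y, hY, fun a => Set.Finite.of_finite_image ?_ (injOn.mono Set.sdiff_subset)⟩
  refine (Set.finite_Iic a).subset ?_
  rintro _ ⟨b, ⟨-, hb⟩, rfl⟩
  exact Nat.find_min' (exists_least b) (.inl hb)

lemma exists_diagonal (hs : IsSelective u) (hu : Nonprincipal u) {A : ℕ → Set ℕ}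
    (hA : ∀ a, A a ∈ u) : ∃ X ∈ u, ∀ a ∈ X, ∀ b ∈ X, a < b → b ∈ A a := by
  obtain ⟨Y, hY, hfin⟩ := hs.exists_finite_diff hu hA
  choose g hg using fun a => (hfin a).bddAbove
  obtain ⟨X, hX, sparse⟩ := hs.exists_sparse hu fun a => g a + 1
  refine ⟨X ∩ Y, Filter.inter_mem hX hY, ?_⟩
  rintro a ⟨haX, -⟩ b ⟨hbX, hbY⟩ hab
  by_contra hbA
  exact (sparse a haX b hbX hab).not_gt (Nat.lt_succ_of_le (hg a ⟨hbY, hbA⟩))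

lemma hasIncreasingBase (hs : IsSelective u) (hu : Nonprincipal u) : HasIncreasingBase u := by
  intro k
  induction k with
  | zero =>
    exact fun S hS => ⟨Set.univ, Filter.univ_mem, by simp [eq_univ_of_mem_tensorPow_zero hS]⟩
  | succ k ih =>
    intro S hS
    rw [mem_tensorPow_succ] at hS
    have section_base (a : ℕ) : ∃ B ∈ u, {x | Fin.cons a x ∈ S} ∈ tensorPow u k →
        increasingTuples B k ⊆ {x | Fin.cons a x ∈ S} := by
      by_cases ha : {x | Fin.cons a x ∈ S} ∈ tensorPow u k
      · obtain ⟨B, hB, hBS⟩ := ih _ ha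
        exact ⟨B, hB, fun _ => hBS⟩
      · exact ⟨Set.univ, Filter.univ_mem, fun h => absurd h ha⟩
    choose B hB hBS using section_base
    obtain ⟨X, hX, diagonal⟩ := hs.exists_diagonal hu hB
    refine ⟨_, Filter.inter_mem hX hS, fun x hx => ?_⟩
    rw [← Fin.cons_self_tail x, cons_mem_increasingTuples_iff] at hx
    obtain ⟨⟨hx₀X, hx₀⟩, htail⟩ := hx
    rw [← Fin.cons_self_tail x]
    exact hBS _ hx₀ ⟨htail.1, fun i => diagonal _ hx₀X _ (htail.2 i).1.1 (htail.2 i).2⟩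

end IsSelective

end Selective

/-- a nonprincipal ultrafilter `u` on `ℕ` is Ramsey iff for every `n ≥ 1`
and every `f : ℕ^n → ℕ`, either `f̃(u, …, u)` is principal, or `f̃(u, …, u)` is
Rudin–Keisler equivalent to the `m`-fold product `u × ⋯ × u` (i.e. to `w̃(u, …, u)` for an
injective `w : ℕ^m → ℕ`) for some `1 ≤ m ≤ n`. -/
theorem stmt_19 (u : Ultrafilter ℕ) (hu : Nonprincipal u) :
    IsRamseyU u ↔
      ∀ n : ℕ, 1 ≤ n → ∀ f : (Fin n → ℕ) → ℕ,
        (∃ c : ℕ, diagExt f u = pure c) ∨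
        ∃ m : ℕ, 1 ≤ m ∧ m ≤ n ∧
          ∃ w : (Fin m → ℕ) → ℕ, Function.Injective w ∧
            RKeq (diagExt f u) (diagExt w u) := by
  constructor
  · intro ramsey n _ f
    obtain ⟨m, hmn, w, hw, hrk⟩ := ramsey.hasIncreasingBase.exists_rkeq_diagExt hu f
    rcases m.eq_zero_or_pos with rfl | hm
    · exact .inl (exists_eq_pure_of_rkle_diagExt_fin_zero hrk.1)
    · exact .inr ⟨m, hm, hmn, w, hw, hrk⟩
  · intro H
    have selective : IsSelective u := isSelective_of_forall_rkeq_diagExt fun f =>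
      (H 1 le_rfl f).imp_right fun ⟨m, h₁, h₂, h⟩ => by
        obtain rfl : m = 1 := le_antisymm h₂ h₁
        exact h
    exact (selective.hasIncreasingBase hu).isRamseyU hu
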